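/- Let Y be a topological space, b ∈ Y, ℓ ≥ 1, and 0 < ρ ≤ 1. Let Φ : ℝ^ℓ → S^ℓ ⊆ ℝ^{ℓ+1} be the inverse stereographic map Φ(x) = ( 2x/(1+|x|²), (1−|x|²)/(1+|x|²) ), which sends the closed unit ball B̄^ℓ onto the closed upper hemisphere and fixes S^{ℓ−1} × {0}. Let U : { x ∈ ℝ^{ℓ+1} : |x| ≤ 1, x_{ℓ+1} ≥ 0 } → Y be continuous, set u(x) = U(x, 0) for x ∈ B̄^ℓ, and assume u(x) = b whenever ρ ≤ |x| ≤ 1. Then for every r ∈ [ρ, 1], the map B̄^ℓ ∋ x ↦ U(r · Φ(x)) is homotopic to u relative to S^{ℓ−1}, i.e., there is a continuous H : B̄^ℓ × [0,1] → Y with H(·,0) = u, H(·,1) = (x ↦ U(r·Φ(x))), and H(x, t) = b for every x ∈ S^{ℓ−1} and t ∈ [0,1]. -/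

import Mathlib

open Metric Set

noncomputable section

/-!
The half-ball is convex, and it contains both `(x, 0)` and `r • Φ x` whenever `‖x‖ ≤ 1`, so the
straight-line homotopy between these two maps stays in the half-ball and `U` can be applied to it.
If `‖x‖ = 1` then `Φ x = (x, 0)`, and the line runs radially from `(x, 0)` to `(r • x, 0)` inside
the flat annulus where `U` is equal to `b`.
-/

section StraightLineHomotopy

variable {X V Y : Type*} [TopologicalSpace X] [AddCommGroup V] [Module ℝ V] [TopologicalSpace V]
  [IsTopologicalAddGroup V] [ContinuousSMul ℝ V] [TopologicalSpace Y]

theorem continuousOn_comp_lineMap_of_convex {S : Set V} (hS : Convex ℝ S) {U : V → Y}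
    (hU : ContinuousOn U S) {K : Set X} {f g : X → V} (hf : ContinuousOn f K)
    (hg : ContinuousOn g K) (hfS : MapsTo f K S) (hgS : MapsTo g K S) :
    ContinuousOn (fun p : X × ℝ ↦ U (AffineMap.lineMap (f p.1) (g p.1) p.2))
      (K ×ˢ Icc (0 : ℝ) 1) := by
  have fst_mapsTo : MapsTo Prod.fst (K ×ˢ Icc (0 : ℝ) 1) K := fun _ hp ↦ hp.1
  refine hU.comp ?_ fun p hp ↦ hS.lineMap_mem (hfS hp.1) (hgS hp.1) hp.2
  exact (hf.comp continuousOn_fst fst_mapsTo).lineMap (hg.comp continuousOn_fst fst_mapsTo)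
    continuousOn_snd

end StraightLineHomotopy

section UpperHalfBall

variable {E : Type*} [SeminormedAddCommGroup E]

variable (E) in
/-- The closed upper half of the unit ball of `E × ℝ` for the Euclidean product norm. It is written
as an explicit inequality because the type `E × ℝ` carries the sup norm. -/
def upperHalfBall : Set (E × ℝ) := {z | ‖z.1‖ ^ 2 + z.2 ^ 2 ≤ 1 ∧ 0 ≤ z.2}

theorem mk_zero_mem_upperHalfBall {x : E} (hx : ‖x‖ ≤ 1) : (x, (0 : ℝ)) ∈ upperHalfBall E := by
  simpa [upperHalfBall] using hx

variable [NormedSpace ℝ E]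

variable (E) in
theorem convex_upperHalfBall : Convex ℝ (upperHalfBall E) := by
  have convexOn_fst : ConvexOn ℝ univ fun z : E × ℝ ↦ ‖z.1‖ ^ 2 :=
    ((convexOn_univ_norm (E := E)).pow (fun _ _ ↦ norm_nonneg _) 2).comp_linearMap
      (LinearMap.fst ℝ E ℝ)
  have convexOn_snd : ConvexOn ℝ univ fun z : E × ℝ ↦ z.2 ^ 2 :=
    (even_two.convexOn_pow (𝕜 := ℝ)).comp_linearMap (LinearMap.snd ℝ E ℝ)
  have convex_ball : Convex ℝ {z : E × ℝ | ‖z.1‖ ^ 2 + z.2 ^ 2 ≤ 1} := by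
    simpa using (convexOn_fst.add convexOn_snd).convex_le 1
  exact convex_ball.inter (convex_halfSpace_ge (LinearMap.snd ℝ E ℝ).isLinear 0)

theorem smul_mem_upperHalfBall {z : E × ℝ} (hz : z ∈ upperHalfBall E) {r : ℝ}
    (hr : r ∈ Icc (0 : ℝ) 1) : r • z ∈ upperHalfBall E :=
  (convex_upperHalfBall E).smul_mem_of_zero_mem (by simp [upperHalfBall]) hz hr

/-- The inverse stereographic projection `Φ` from the south pole, sending `E` into the Euclidean
unit sphere of `E × ℝ` and the closed unit ball of `E` into the upper hemisphere. -/
def invStereographic (x : E) : E × ℝ :=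
  ((2 / (1 + ‖x‖ ^ 2)) • x, (1 - ‖x‖ ^ 2) / (1 + ‖x‖ ^ 2))

theorem continuous_invStereographic : Continuous (invStereographic : E → E × ℝ) := by
  have denom_ne_zero (x : E) : 1 + ‖x‖ ^ 2 ≠ 0 := by positivity
  unfold invStereographic
  fun_prop (disch := exact denom_ne_zero _)

theorem norm_sq_add_sq_invStereographic (x : E) :
    ‖(invStereographic x).1‖ ^ 2 + (invStereographic x).2 ^ 2 = 1 := by
  have denom_pos : 0 < 1 + ‖x‖ ^ 2 := by positivity
  rw [invStereographic, norm_smul, Real.norm_of_nonneg (div_pos two_pos denom_pos).le]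
  field_simp
  ring

theorem invStereographic_mem_upperHalfBall {x : E} (hx : ‖x‖ ≤ 1) :
    invStereographic x ∈ upperHalfBall E := by
  refine ⟨(norm_sq_add_sq_invStereographic x).le, div_nonneg ?_ (by positivity)⟩
  exact sub_nonneg.2 (pow_le_one₀ (norm_nonneg x) hx)

theorem invStereographic_of_norm_eq_one {x : E} (hx : ‖x‖ = 1) : invStereographic x = (x, 0) := by
  norm_num [invStereographic, hx]

theorem lineMap_mk_zero_smul_invStereographic {x : E} (hx : ‖x‖ = 1) (r t : ℝ) :
    AffineMap.lineMap (x, (0 : ℝ)) (r • invStereographic x) t =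
      ((AffineMap.lineMap 1 r t : ℝ) • x, 0) := by
  rw [invStereographic_of_norm_eq_one hx]
  simp [AffineMap.lineMap_apply_module, add_smul, mul_smul]

section Homotopy

variable {Y : Type*} {r : ℝ} {U : E × ℝ → Y}

theorem continuousOn_comp_lineMap_smul_invStereographic [TopologicalSpace Y]
    (hr : r ∈ Icc (0 : ℝ) 1) (hU : ContinuousOn U (upperHalfBall E)) :
    ContinuousOn (fun p : E × ℝ ↦ U (AffineMap.lineMap (p.1, 0) (r • invStereographic p.1) p.2))
      (closedBall 0 1 ×ˢ Icc (0 : ℝ) 1) := by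
  have base_mapsTo : MapsTo (fun x : E ↦ (x, (0 : ℝ))) (closedBall 0 1) (upperHalfBall E) :=
    fun _ hx ↦ mk_zero_mem_upperHalfBall (mem_closedBall_zero_iff.1 hx)
  have cap_mapsTo : MapsTo (r • invStereographic) (closedBall (0 : E) 1) (upperHalfBall E) :=
    fun _ hx ↦
      smul_mem_upperHalfBall (invStereographic_mem_upperHalfBall (mem_closedBall_zero_iff.1 hx)) hr
  exact (continuousOn_comp_lineMap_of_convex (convex_upperHalfBall E) hU (by fun_prop)
    (continuous_invStereographic.const_smul r).continuousOn base_mapsTo cap_mapsTo :)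

theorem comp_lineMap_smul_invStereographic_of_norm_eq_one (hr : r ∈ Icc (0 : ℝ) 1) {b : Y}
    (hb : ∀ x : E, r ≤ ‖x‖ → ‖x‖ ≤ 1 → U (x, 0) = b) {x : E} (hx : ‖x‖ = 1) {t : ℝ}
    (ht : t ∈ Icc (0 : ℝ) 1) :
    U (AffineMap.lineMap (x, 0) (r • invStereographic x) t) = b := by
  obtain ⟨r_le, le_one⟩ : (AffineMap.lineMap 1 r t : ℝ) ∈ Icc r 1 :=
    (convex_Icc r 1).lineMap_mem (right_mem_Icc.2 hr.2) (left_mem_Icc.2 hr.2) ht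
  have norm_smul_x : ‖(AffineMap.lineMap 1 r t : ℝ) • x‖ = AffineMap.lineMap 1 r t := by
    rw [norm_smul, hx, mul_one, Real.norm_of_nonneg (hr.1.trans r_le)]
  rw [lineMap_mk_zero_smul_invStereographic hx]
  exact hb _ (r_le.trans_eq norm_smul_x.symm) (norm_smul_x.trans_le le_one)

theorem statement6_general [TopologicalSpace Y] (hr : r ∈ Icc (0 : ℝ) 1)
    (hU : ContinuousOn U (upperHalfBall E)) {b : Y}
    (hb : ∀ x : E, r ≤ ‖x‖ → ‖x‖ ≤ 1 → U (x, 0) = b) :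
    ∃ H : E × ℝ → Y, ContinuousOn H (closedBall 0 1 ×ˢ Icc (0 : ℝ) 1) ∧
      (∀ x ∈ closedBall (0 : E) 1,
        H (x, 0) = U (x, 0) ∧ H (x, 1) = U (r • invStereographic x)) ∧
      (∀ x ∈ sphere (0 : E) 1, ∀ t ∈ Icc (0 : ℝ) 1, H (x, t) = b) :=
  ⟨fun p ↦ U (AffineMap.lineMap (p.1, 0) (r • invStereographic p.1) p.2),
    continuousOn_comp_lineMap_smul_invStereographic hr hU, fun _ _ ↦ by simp,
    fun _ hx _ ht ↦ comp_lineMap_smul_invStereographic_of_norm_eq_one hr hb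
      (mem_sphere_zero_iff_norm.1 hx) ht⟩

end Homotopy

end UpperHalfBall

/-- rescaled restrictions of a continuous map `U` on the closed upper half-ball to
upper half-spheres of radii `r ∈ [ρ, 1]`, transported to `B̄^ℓ` by the inverse stereographic
map `Φ(x) = (2x/(1+|x|²), (1-|x|²)/(1+|x|²))`, are all homotopic to `u = U(·,0)` relative to
`S^{ℓ-1}`, provided `u = b` on `{ρ ≤ |x| ≤ 1}`. -/
theorem statement6.{u_1} (Y : Type u_1) [TopologicalSpace Y] (b : Y)
    (l : ℕ) (hl : 1 ≤ l) (ρ : ℝ) (hρ0 : 0 < ρ) (hρ1 : ρ ≤ 1)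
    (U : EuclideanSpace ℝ (Fin l) × ℝ → Y)
    (hU : ContinuousOn U {z : EuclideanSpace ℝ (Fin l) × ℝ | ‖z.1‖ ^ 2 + z.2 ^ 2 ≤ 1 ∧ 0 ≤ z.2})
    (u : EuclideanSpace ℝ (Fin l) → Y)
    (hu : ∀ x : EuclideanSpace ℝ (Fin l), u x = U (x, 0))
    (hub : ∀ x : EuclideanSpace ℝ (Fin l), ρ ≤ ‖x‖ → ‖x‖ ≤ 1 → u x = b) :
    ∀ r ∈ Icc ρ 1, ∃ H : EuclideanSpace ℝ (Fin l) × ℝ → Y,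
      ContinuousOn H (closedBall 0 1 ×ˢ Icc (0 : ℝ) 1) ∧
      (∀ x ∈ closedBall (0 : EuclideanSpace ℝ (Fin l)) 1,
        H (x, 0) = u x ∧
        H (x, 1) = U (r • (((2 / (1 + ‖x‖ ^ 2)) • x : EuclideanSpace ℝ (Fin l)),
          (1 - ‖x‖ ^ 2) / (1 + ‖x‖ ^ 2)))) ∧
      (∀ x ∈ sphere (0 : EuclideanSpace ℝ (Fin l)) 1, ∀ t ∈ Icc (0 : ℝ) 1, H (x, t) = b) := by
  obtain rfl : u = fun x ↦ U (x, 0) := funext hu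
  exact fun r hr ↦ statement6_general ⟨hρ0.le.trans hr.1, hr.2⟩ hU fun x hx ↦ hub x (hr.1.trans hx)

end
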